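/- If P and Q are pre-G-Hilbert C_0(Y)-modules, then the tensor product P ⊗_{C_0(Y)} Q, with the diagonal G-action g(p_y ⊗ q_y) = (gp_y) ⊗ (gq_y) on fibers, is a G-Hilbert module; in particular the diagonal action on the Hilbert bundle E_P ⊗ E_Q (fiber P_y ⊗ Q_y at y) is continuous. -/

import Mathlib

/-!
The diagonal action is built by extending, fiber by fiber, an isometry defined on finite sums of
elementary tensors.

**Fibers.** Everything is phrased on the modules themselves, with the seminorms
`nm y a = ⟨a, a⟩(y)^{1/2}`. The link with the bundle is `mem_fiberIdeal_iff`: in a complete module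
the algebraic span `I_y M` is exactly the null space of `nm y`, because an element `a` factors as
`b · u` with `u = ⟨a, a⟩^{1/4}`. Hence two elements have the same image in the fiber at `y` iff
`nm y` of their difference vanishes, and `fibNormQ` is induced by `nm y`. Fibers are complete
(`exists_fiber_limit`), since each vector of the fiber has a representative of comparable module
norm (`exists_small_rep`).

**Construction.** For `g` in the groupoid, `diagGraph` is the span in `R × R` of the pairs
`(p ⊗ q, p' ⊗ q')` with `g p = p'`, `g q = q'` on fibers. The actions on `P` and `Q` preserve inner
products by polarization, so `⟨p₁ ⊗ q₁, p₂ ⊗ q₂⟩ = ⟨p₁, p₂⟩⟨q₁, q₂⟩` makes `diagGraph` isometric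
from the seminorm at `s g` to the one at `r g` (`diagGraph_ipAt`). Its domain and its range are
dense, so by completeness of the fibers its closure `DiagRel` is the graph of a surjective isometry
(`exists_extension`). Compatibility with units and products holds on elementary tensors and
passes to the closure.

**Continuity.** Near `(g₀, e₀)`, replace `e₀` up to `δ` by a finite sum `a` of elementary tensors.
Unitarity makes the error uniform in `g`, and `g ↦ g · a` is continuous because
`‖p ⊗ q - p' ⊗ q'‖ ≤ ‖p - p'‖‖q‖ + ‖p'‖‖q - q'‖` in each fiber and the actions on `P` and `Q` are
continuous along the sections `p̂`, `q̂` (`diagGraph_eventually`, `continuous_diagAct`).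
-/

noncomputable section
open scoped ZeroAtInfty
open Topology Filter ComplexConjugate

namespace Stabilization

/-- The set of continuous sections vanishing at infinity of a family of normed fibers,
relative to a given topology on the total space of the bundle. -/
def C0Sections {Y : Type} [TopologicalSpace Y] (H : Y → Type)
    [∀ y, NormedAddCommGroup (H y)] (tE : TopologicalSpace ((y : Y) × H y)) :
    Set ((y : Y) → H y) :=
  {F | @Continuous Y ((y : Y) × H y) _ tE (fun y => ⟨y, F y⟩) ∧
    Tendsto (fun y => ‖F y‖) (cocompact Y) (nhds 0)}

/-- A Hilbert bundle over `Y` (Definition 2.1 of the paper): a family of Hilbert spaces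
`H y` together with a second countable topology on the total space such that
(i) fiberwise addition and scalar multiplication are continuous, (ii) the norm along any
continuous section vanishing at infinity is continuous, (iii) the continuous sections
vanishing at infinity fill out every fiber, and (iv) the sets `U_{F,ε}` form a base. -/
structure HilbertBundle (Y : Type) [TopologicalSpace Y] where
  H : Y → Type
  [nacg : ∀ y, NormedAddCommGroup (H y)]
  [ips : ∀ y, InnerProductSpace ℂ (H y)]
  [cpl : ∀ y, CompleteSpace (H y)]
  topE : TopologicalSpace ((y : Y) × H y)
  secondCountable : @SecondCountableTopology ((y : Y) × H y) topE
  add_cont : @Continuous {p : ((y : Y) × H y) × ((y : Y) × H y) // p.1.1 = p.2.1}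
      ((y : Y) × H y)
      (@instTopologicalSpaceSubtype _ _ (@instTopologicalSpaceProd _ _ topE topE)) topE
      (fun p => ⟨p.1.1.1, p.1.1.2 + cast (congrArg H p.2).symm p.1.2.2⟩)
  smul_cont : @Continuous (ℂ × (y : Y) × H y) ((y : Y) × H y)
      (@instTopologicalSpaceProd _ _ _ topE) topE
      (fun p => ⟨p.2.1, p.1 • p.2.2⟩)
  norm_cont : ∀ F ∈ C0Sections H topE, Continuous fun y => ‖F y‖
  fiber_full : ∀ (y : Y) (v : H y), ∃ F ∈ C0Sections H topE, F y = v
  isBasis : @TopologicalSpace.IsTopologicalBasis ((y : Y) × H y) topE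
      {S | ∃ (U : Set Y) (F : (y : Y) → H y) (ε : ℝ), IsOpen U ∧ F ∈ C0Sections H topE ∧
        0 < ε ∧ S = {e | e.1 ∈ U ∧ ‖e.2 - F e.1‖ < ε}}

attribute [instance] HilbertBundle.nacg HilbertBundle.ips HilbertBundle.cpl

/-- A Hilbert `C₀(Y)`-module structure on `P`: a right `C₀(Y)`-module action and a
`C₀(Y)`-valued inner product, complete for the norm `‖p‖ = ‖⟨p,p⟩‖^{1/2}` (completeness
being recorded by a `CompleteSpace` instance on `P` at use sites). -/
class HilbertCzeroModule (Y : Type) [TopologicalSpace Y] (P : Type)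
    [NormedAddCommGroup P] [NormedSpace ℂ P] where
  msmul : P → C₀(Y, ℂ) → P
  minner : P → P → C₀(Y, ℂ)
  msmul_add_left : ∀ (p q : P) (f : C₀(Y, ℂ)), msmul (p + q) f = msmul p f + msmul q f
  msmul_add_right : ∀ (p : P) (f g : C₀(Y, ℂ)), msmul p (f + g) = msmul p f + msmul p g
  msmul_mul : ∀ (p : P) (f g : C₀(Y, ℂ)), msmul (msmul p f) g = msmul p (f * g)
  msmul_csmul_left : ∀ (c : ℂ) (p : P) (f : C₀(Y, ℂ)), msmul (c • p) f = c • msmul p f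
  msmul_csmul_right : ∀ (c : ℂ) (p : P) (f : C₀(Y, ℂ)), msmul p (c • f) = c • msmul p f
  minner_add_right : ∀ p q r : P, minner p (q + r) = minner p q + minner p r
  minner_conj : ∀ p q : P, minner p q = star (minner q p)
  minner_csmul_right : ∀ (c : ℂ) (p q : P), minner p (c • q) = c • minner p q
  minner_msmul_right : ∀ (p q : P) (f : C₀(Y, ℂ)), minner p (msmul q f) = minner p q * f
  minner_self_re_nonneg : ∀ (p : P) (y : Y), 0 ≤ (minner p p y).re
  minner_self_im : ∀ (p : P) (y : Y), (minner p p y).im = 0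
  norm_eq : ∀ p : P, ‖p‖ = Real.sqrt ‖minner p p‖

/-- The module action, with the base space explicit. -/
def modSMul (Y : Type) [TopologicalSpace Y] {P : Type} [NormedAddCommGroup P]
    [NormedSpace ℂ P] [HilbertCzeroModule Y P] (p : P) (f : C₀(Y, ℂ)) : P :=
  HilbertCzeroModule.msmul p f

/-- The `C₀(Y)`-valued inner product, with the base space explicit. -/
def modIP (Y : Type) [TopologicalSpace Y] {P : Type} [NormedAddCommGroup P]
    [NormedSpace ℂ P] [HilbertCzeroModule Y P] (p q : P) : C₀(Y, ℂ) :=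
  HilbertCzeroModule.minner p q

variable (Y : Type) [TopologicalSpace Y]
variable (P : Type) [NormedAddCommGroup P] [NormedSpace ℂ P] [HilbertCzeroModule Y P]

/-- `I_y P`: the closed submodule generated by products `p·f` with `f(y) = 0`. -/
def fiberIdeal (y : Y) : Submodule ℂ P :=
  Submodule.span ℂ {x | ∃ (f : C₀(Y, ℂ)) (p : P), f y = 0 ∧ x = modSMul Y p f}

/-- The fiber `P_y = P / I_y P` of the Hilbert bundle associated to `P`. -/
abbrev Fib (y : Y) : Type := P ⧸ fiberIdeal Y P y

/-- `p ↦ p̂(y)`, the image of `p` in the fiber `P_y`. -/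
def fibMk (y : Y) : P → Fib Y P y := Submodule.Quotient.mk

/-- The fiber norm of `p̂(y)`, computed from a representative. -/
def fibNormRep (y : Y) (p : P) : ℝ := Real.sqrt ((modIP Y p p) y).re

/-- The norm on the fiber `P_y` (the common value of `fibNormRep` over representatives). -/
def fibNormQ (y : Y) (h : Fib Y P y) : ℝ :=
  sInf {r | ∃ p : P, h = fibMk Y P y p ∧ r = fibNormRep Y P y p}

/-- The total space `E_P = ⊔_y P_y` of the bundle associated to `P`. -/
abbrev TotalP : Type := (y : Y) × Fib Y P y

/-- The basic sets `U_{p,ε}` of the bundle `E_P`. -/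
def basisP : Set (Set (TotalP Y P)) :=
  {S | ∃ (U : Set Y) (p : P) (ε : ℝ), IsOpen U ∧ 0 < ε ∧
    S = {e : TotalP Y P | e.1 ∈ U ∧ fibNormQ Y P e.1 (e.2 - fibMk Y P e.1 p) < ε}}

/-- The topology on `E_P` generated by the sets `U_{p,ε}`. -/
def topEP : TopologicalSpace (TotalP Y P) := TopologicalSpace.generateFrom (basisP Y P)

/-- The continuous sections of `E_P` vanishing at infinity. -/
def C0SectionsP : Set ((y : Y) → Fib Y P y) :=
  {F | @Continuous Y (TotalP Y P) _ (topEP Y P) (fun y => ⟨y, F y⟩) ∧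
    Tendsto (fun y => fibNormQ Y P y (F y)) (cocompact Y) (nhds 0)}

/-- The section `p̂` associated to `p ∈ P`. -/
def hatSec (p : P) : (y : Y) → Fib Y P y := fun y => fibMk Y P y p

/-- Transport between fibers of `E_P` over equal base points. -/
def fcast {y z : Y} (h : y = z) : Fib Y P y → Fib Y P z := fun v => h ▸ v


variable (Y : Type) [TopologicalSpace Y]

/-- A second countable locally compact Hausdorff proper topological groupoid with unit
space `Y`.  Multiplication is recorded as a total map which is only constrained on
composable pairs. -/
structure LCGroupoid where
  G : Type
  [topG : TopologicalSpace G]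
  [t2G : T2Space G]
  [lcG : LocallyCompactSpace G]
  [scG : SecondCountableTopology G]
  [mG : MeasurableSpace G]
  [bG : BorelSpace G]
  r : G → Y
  s : G → Y
  unit : Y → G
  mul : G → G → G
  inv : G → G
  unit_embedding : Topology.IsEmbedding unit
  r_unit : ∀ y, r (unit y) = y
  s_unit : ∀ y, s (unit y) = y
  r_cont : Continuous r
  s_cont : Continuous s
  inv_cont : Continuous inv
  mul_cont : Continuous fun p : {p : G × G // s p.1 = r p.2} => mul p.1.1 p.1.2
  r_mul : ∀ g h, s g = r h → r (mul g h) = r g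
  s_mul : ∀ g h, s g = r h → s (mul g h) = s h
  mul_assoc : ∀ g h k, s g = r h → s h = r k → mul (mul g h) k = mul g (mul h k)
  mul_unit : ∀ g, mul g (unit (s g)) = g
  unit_mul : ∀ g, mul (unit (r g)) g = g
  r_inv : ∀ g, r (inv g) = s g
  s_inv : ∀ g, s (inv g) = r g
  mul_inv : ∀ g, mul g (inv g) = unit (r g)
  inv_mul : ∀ g, mul (inv g) g = unit (s g)
  proper : IsProperMap fun g => (r g, s g)

attribute [instance] LCGroupoid.topG LCGroupoid.t2G LCGroupoid.lcG LCGroupoid.scG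
  LCGroupoid.mG LCGroupoid.bG

variable (Gp : LCGroupoid Y)

/-- A left Haar system `{λ^y}` for the groupoid `Gp`:  `λ^y` is a Radon-type measure
concentrated on `G^y = r⁻¹(y)` with support `G^y`, varying continuously, and
left invariant. -/
structure HaarSystem where
  lam : Y → MeasureTheory.Measure Gp.G
  concentrated : ∀ y, lam y ((Gp.r ⁻¹' {y})ᶜ) = 0
  full : ∀ (y : Y) (U : Set Gp.G), IsOpen U → (U ∩ Gp.r ⁻¹' {y}).Nonempty → lam y U ≠ 0
  finiteOnCompacts : ∀ (y : Y) (K : Set Gp.G), IsCompact K → lam y K ≠ ⊤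
  integral_continuous : ∀ F : Gp.G → ℂ, Continuous F → HasCompactSupport F →
    Continuous fun y => ∫ g, F g ∂(lam y)
  left_invariant : ∀ (g₀ : Gp.G) (F : Gp.G → ℂ), Continuous F → HasCompactSupport F →
    ∫ g, F (Gp.mul g₀ g) ∂(lam (Gp.s g₀)) = ∫ g, F g ∂(lam (Gp.r g₀))

/-- Continuous compactly supported functions on the groupoid `Gp`. -/
def CcFun : Type := {F : Gp.G → ℂ // Continuous F ∧ HasCompactSupport F}


section GroupoidActions

variable {Y : Type} [TopologicalSpace Y] (Gp : LCGroupoid Y)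
variable (P : Type) [NormedAddCommGroup P] [NormedSpace ℂ P] [HilbertCzeroModule Y P]

/-- A continuous, unitary left action of the groupoid `Gp` on the Hilbert bundle `E_P`
associated to the Hilbert `C₀(Y)`-module `P`: this is the datum making `P` a
`G`-Hilbert module. -/
structure GAction where
  act : (g : Gp.G) → Fib Y P (Gp.s g) → Fib Y P (Gp.r g)
  act_add : ∀ (g : Gp.G) (v w : Fib Y P (Gp.s g)), act g (v + w) = act g v + act g w
  act_csmul : ∀ (g : Gp.G) (c : ℂ) (v : Fib Y P (Gp.s g)), act g (c • v) = c • act g v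
  act_norm : ∀ (g : Gp.G) (v : Fib Y P (Gp.s g)),
    fibNormQ Y P (Gp.r g) (act g v) = fibNormQ Y P (Gp.s g) v
  act_surjective : ∀ g : Gp.G, Function.Surjective (act g)
  act_unit : ∀ (y : Y) (v : Fib Y P y),
    act (Gp.unit y) (fcast Y P (Gp.s_unit y).symm v) = fcast Y P (Gp.r_unit y).symm v
  act_mul : ∀ (g h : Gp.G) (hc : Gp.s g = Gp.r h) (v : Fib Y P (Gp.s h)),
    act (Gp.mul g h) (fcast Y P (Gp.s_mul g h hc).symm v) =
      fcast Y P (Gp.r_mul g h hc).symm (act g (fcast Y P hc.symm (act h v)))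
  act_cont : @Continuous {q : Gp.G × TotalP Y P // Gp.s q.1 = q.2.1} (TotalP Y P)
    (@instTopologicalSpaceSubtype _ _ (@instTopologicalSpaceProd _ _ _ (topEP Y P)))
    (topEP Y P)
    (fun q => ⟨Gp.r q.1.1, act q.1.1 (fcast Y P q.2.symm q.1.2.2)⟩)

variable {Gp P}
variable {Q : Type} [NormedAddCommGroup Q] [NormedSpace ℂ Q] [HilbertCzeroModule Y Q]

/-- A `G`-equivariant unitary isomorphism of `G`-Hilbert modules:  a bijective,
`ℂ`-linear, `C₀(Y)`-linear, inner-product preserving map intertwining the `G`-actions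
on the associated Hilbert bundles. -/
def IsGEquivariantUnitary (T : P → Q) (AP : GAction Gp P) (AQ : GAction Gp Q) : Prop :=
  Function.Bijective T ∧
  (∀ p p' : P, T (p + p') = T p + T p') ∧
  (∀ (c : ℂ) (p : P), T (c • p) = c • T p) ∧
  (∀ (p : P) (f : C₀(Y, ℂ)), T (modSMul Y p f) = modSMul Y (T p) f) ∧
  (∀ p p' : P, modIP Y (T p) (T p') = modIP Y p p') ∧
  (∀ (g : Gp.G) (p p' : P),
      AP.act g (fibMk Y P (Gp.s g) p) = fibMk Y P (Gp.r g) p' →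
      AQ.act g (fibMk Y Q (Gp.s g) (T p)) = fibMk Y Q (Gp.r g) (T p'))

/-- Equivalence of `G`-Hilbert modules: existence of a `G`-equivariant unitary. -/
def GEquiv (AP : GAction Gp P) (AQ : GAction Gp Q) : Prop :=
  ∃ T : P → Q, IsGEquivariantUnitary T AP AQ

end GroupoidActions

section ModuleConstructions

variable {Y : Type} [TopologicalSpace Y] (Gp : LCGroupoid Y)

/-- Data exhibiting a Hilbert `C₀(Y)`-module `PG` as the completion `P_G` of the
pre-Hilbert `C₀(Y)`-module `C_c(G)`, with module action `F·f = F·(f∘r)` and inner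
product `⟨F₁,F₂⟩(y) = ∫_{G^y} conj F₁ · F₂ dλ^y`. -/
structure PGData (hs : HaarSystem Y Gp) (PG : Type) [NormedAddCommGroup PG]
    [NormedSpace ℂ PG] [HilbertCzeroModule Y PG] where
  emb : CcFun Y Gp → PG
  emb_add : ∀ F₁ F₂ F₃ : CcFun Y Gp, F₃.1 = F₁.1 + F₂.1 → emb F₃ = emb F₁ + emb F₂
  emb_csmul : ∀ (c : ℂ) (F₁ F₃ : CcFun Y Gp), F₃.1 = c • F₁.1 → emb F₃ = c • emb F₁
  emb_msmul : ∀ (F₁ F₃ : CcFun Y Gp) (f : C₀(Y, ℂ)),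
    F₃.1 = (fun g => F₁.1 g * f (Gp.r g)) → emb F₃ = modSMul Y (emb F₁) f
  emb_inner : ∀ (F₁ F₂ : CcFun Y Gp) (y : Y),
    modIP Y (emb F₁) (emb F₂) y = ∫ g, conj (F₁.1 g) * F₂.1 g ∂(hs.lam y)
  emb_dense : ∀ (p : PG) (ε : ℝ), 0 < ε → ∃ F : CcFun Y Gp, ‖p - emb F‖ < ε

variable {Gp}

/-- The natural left translation action of `G` on `L²(G) = E_{P_G}`, characterized on
the dense image of `C_c(G)` by `(g·ξ)(h) = ξ(g⁻¹h)` for `h ∈ G^{r(g)}`. -/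
def IsNaturalPGAction {hs : HaarSystem Y Gp} {PG : Type} [NormedAddCommGroup PG]
    [NormedSpace ℂ PG] [HilbertCzeroModule Y PG] (d : PGData Gp hs PG)
    (A : GAction Gp PG) : Prop :=
  ∀ (g : Gp.G) (F F' : CcFun Y Gp),
    (∀ h : Gp.G, Gp.r h = Gp.r g → F'.1 h = F.1 (Gp.mul (Gp.inv g) h)) →
    A.act g (fibMk Y PG (Gp.s g) (d.emb F)) = fibMk Y PG (Gp.r g) (d.emb F')

end ModuleConstructions

section TensorSum

/-- Data exhibiting `R` as the interior tensor product `P ⊗_{C₀(Y)} Q` of two Hilbert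
`C₀(Y)`-modules: a balanced bilinear map with dense span satisfying
`⟨p₁⊗q₁, p₂⊗q₂⟩ = ⟨p₁,p₂⟩⟨q₁,q₂⟩`. -/
structure TensorData (Y : Type) [TopologicalSpace Y] (P Q R : Type)
    [NormedAddCommGroup P] [NormedSpace ℂ P] [HilbertCzeroModule Y P]
    [NormedAddCommGroup Q] [NormedSpace ℂ Q] [HilbertCzeroModule Y Q]
    [NormedAddCommGroup R] [NormedSpace ℂ R] [HilbertCzeroModule Y R] where
  t : P → Q → R
  t_add_left : ∀ (p p' : P) (q : Q), t (p + p') q = t p q + t p' q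
  t_add_right : ∀ (p : P) (q q' : Q), t p (q + q') = t p q + t p q'
  t_csmul_left : ∀ (c : ℂ) (p : P) (q : Q), t (c • p) q = c • t p q
  t_csmul_right : ∀ (c : ℂ) (p : P) (q : Q), t p (c • q) = c • t p q
  t_msmul_left : ∀ (p : P) (q : Q) (f : C₀(Y, ℂ)), t (modSMul Y p f) q = modSMul Y (t p q) f
  t_msmul_right : ∀ (p : P) (q : Q) (f : C₀(Y, ℂ)), t p (modSMul Y q f) = modSMul Y (t p q) f
  t_inner : ∀ (p p' : P) (q q' : Q),
    modIP Y (t p q) (t p' q') = modIP Y p p' * modIP Y q q'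
  t_dense : ∀ (x : R) (ε : ℝ), 0 < ε →
    ∃ (n : ℕ) (ps : Fin n → P) (qs : Fin n → Q), ‖x - ∑ i, t (ps i) (qs i)‖ < ε

/-- Data exhibiting `S` as the Hilbert `C₀(Y)`-module direct sum `P ⊕ Q`. -/
structure SumData (Y : Type) [TopologicalSpace Y] (P Q S : Type)
    [NormedAddCommGroup P] [NormedSpace ℂ P] [HilbertCzeroModule Y P]
    [NormedAddCommGroup Q] [NormedSpace ℂ Q] [HilbertCzeroModule Y Q]
    [NormedAddCommGroup S] [NormedSpace ℂ S] [HilbertCzeroModule Y S] where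
  inl : P → S
  inr : Q → S
  inl_add : ∀ p p' : P, inl (p + p') = inl p + inl p'
  inr_add : ∀ q q' : Q, inr (q + q') = inr q + inr q'
  inl_csmul : ∀ (c : ℂ) (p : P), inl (c • p) = c • inl p
  inr_csmul : ∀ (c : ℂ) (q : Q), inr (c • q) = c • inr q
  inl_msmul : ∀ (p : P) (f : C₀(Y, ℂ)), inl (modSMul Y p f) = modSMul Y (inl p) f
  inr_msmul : ∀ (q : Q) (f : C₀(Y, ℂ)), inr (modSMul Y q f) = modSMul Y (inr q) f
  inner_ll : ∀ p p' : P, modIP Y (inl p) (inl p') = modIP Y p p'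
  inner_rr : ∀ q q' : Q, modIP Y (inr q) (inr q') = modIP Y q q'
  inner_lr : ∀ (p : P) (q : Q), modIP Y (inl p) (inr q) = 0
  total : ∀ x : S, ∃ (p : P) (q : Q), x = inl p + inr q

/-- Data exhibiting `S` as the Hilbert `C₀(Y)`-module direct sum `⊕_{i=1}^∞ P i` of a
sequence of Hilbert `C₀(Y)`-modules: the module of sequences `{p_i}`, `p_i ∈ P i`, with
`Σ_i ⟨p_i,p_i⟩` convergent in `C₀(Y)`. -/
structure InftySumData (Y : Type) [TopologicalSpace Y] (Pf : ℕ → Type) (S : Type)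
    [∀ i, NormedAddCommGroup (Pf i)] [∀ i, NormedSpace ℂ (Pf i)]
    [∀ i, HilbertCzeroModule Y (Pf i)]
    [NormedAddCommGroup S] [NormedSpace ℂ S] [HilbertCzeroModule Y S] where
  proj : (i : ℕ) → S → Pf i
  proj_add : ∀ (i : ℕ) (x x' : S), proj i (x + x') = proj i x + proj i x'
  proj_csmul : ∀ (i : ℕ) (c : ℂ) (x : S), proj i (c • x) = c • proj i x
  proj_msmul : ∀ (i : ℕ) (x : S) (f : C₀(Y, ℂ)),
    proj i (modSMul Y x f) = modSMul Y (proj i x) f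
  proj_inner : ∀ x x' : S, HasSum (fun i => modIP Y (proj i x) (proj i x')) (modIP Y x x')
  proj_injective : ∀ x x' : S, (∀ i, proj i x = proj i x') → x = x'
  proj_surjective : ∀ u : (i : ℕ) → Pf i, Summable (fun i => modIP Y (u i) (u i)) →
    ∃ x : S, ∀ i, proj i x = u i

variable {Y : Type} [TopologicalSpace Y] {Gp : LCGroupoid Y}
variable {P Q R S : Type}
  [NormedAddCommGroup P] [NormedSpace ℂ P] [HilbertCzeroModule Y P]
  [NormedAddCommGroup Q] [NormedSpace ℂ Q] [HilbertCzeroModule Y Q]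
  [NormedAddCommGroup R] [NormedSpace ℂ R] [HilbertCzeroModule Y R]
  [NormedAddCommGroup S] [NormedSpace ℂ S] [HilbertCzeroModule Y S]

/-- The diagonal `G`-action on a tensor product `P ⊗_{C₀(Y)} Q`. -/
def IsDiagonalAction (td : TensorData Y P Q R) (AP : GAction Gp P) (AQ : GAction Gp Q)
    (AR : GAction Gp R) : Prop :=
  ∀ (g : Gp.G) (p p' : P) (q q' : Q),
    AP.act g (fibMk Y P (Gp.s g) p) = fibMk Y P (Gp.r g) p' →
    AQ.act g (fibMk Y Q (Gp.s g) q) = fibMk Y Q (Gp.r g) q' →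
    AR.act g (fibMk Y R (Gp.s g) (td.t p q)) = fibMk Y R (Gp.r g) (td.t p' q')

/-- The coordinatewise `G`-action on a direct sum `P ⊕ Q`. -/
def IsCoordinateSumAction (sd : SumData Y P Q S) (AP : GAction Gp P) (AQ : GAction Gp Q)
    (AS : GAction Gp S) : Prop :=
  (∀ (g : Gp.G) (p p' : P),
    AP.act g (fibMk Y P (Gp.s g) p) = fibMk Y P (Gp.r g) p' →
    AS.act g (fibMk Y S (Gp.s g) (sd.inl p)) = fibMk Y S (Gp.r g) (sd.inl p')) ∧
  (∀ (g : Gp.G) (q q' : Q),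
    AQ.act g (fibMk Y Q (Gp.s g) q) = fibMk Y Q (Gp.r g) q' →
    AS.act g (fibMk Y S (Gp.s g) (sd.inr q)) = fibMk Y S (Gp.r g) (sd.inr q'))

/-- The coordinatewise `G`-action on an infinite direct sum `⊕_{i=1}^∞ P i`. -/
def IsCoordinateInftyAction {Pf : ℕ → Type} [∀ i, NormedAddCommGroup (Pf i)]
    [∀ i, NormedSpace ℂ (Pf i)] [∀ i, HilbertCzeroModule Y (Pf i)]
    (d : InftySumData Y Pf S) (Af : (i : ℕ) → GAction Gp (Pf i))
    (AS : GAction Gp S) : Prop :=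
  ∀ (g : Gp.G) (x x' : S),
    AS.act g (fibMk Y S (Gp.s g) x) = fibMk Y S (Gp.r g) x' →
    ∀ i, (Af i).act g (fibMk Y (Pf i) (Gp.s g) (d.proj i x)) =
      fibMk Y (Pf i) (Gp.r g) (d.proj i x')

end TensorSum


/-! ### Fiber seminorms and the fibers `M / I_y M` -/

section FiberSeminorm

variable {X : Type} [TopologicalSpace X] {M : Type} [NormedAddCommGroup M] [NormedSpace ℂ M]
  [HilbertCzeroModule X M]

/-- The semi-inner product `⟨a, b⟩(y)` on the module itself. -/
def ipAt (y : X) (a b : M) : ℂ := modIP X a b y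

/-- The seminorm `⟨a, a⟩(y)^{1/2}` on the module itself, with the base space implicit. -/
def nm (y : X) (a : M) : ℝ := fibNormRep X M y a

lemma ipAt_add_right (y : X) (a b c : M) : ipAt y a (b + c) = ipAt y a b + ipAt y a c := by
  simp [ipAt, modIP, HilbertCzeroModule.minner_add_right]

lemma ipAt_smul_right (y : X) (k : ℂ) (a b : M) : ipAt y a (k • b) = k * ipAt y a b := by
  simp [ipAt, modIP, HilbertCzeroModule.minner_csmul_right]

lemma ipAt_conj (y : X) (a b : M) : conj (ipAt y b a) = ipAt y a b := by
  unfold ipAt modIP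
  rw [HilbertCzeroModule.minner_conj a b]
  rfl

lemma ipAt_add_left (y : X) (a b c : M) : ipAt y (a + b) c = ipAt y a c + ipAt y b c := by
  rw [← ipAt_conj, ipAt_add_right, map_add, ipAt_conj, ipAt_conj]

lemma ipAt_smul_left (y : X) (k : ℂ) (a b : M) : ipAt y (k • a) b = conj k * ipAt y a b := by
  rw [← ipAt_conj, ipAt_smul_right, map_mul, ipAt_conj]

lemma ipAt_zero_right (y : X) (a : M) : ipAt y a 0 = 0 := by
  simpa using ipAt_smul_right y 0 a 0

lemma ipAt_zero_left (y : X) (a : M) : ipAt y 0 a = 0 := by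
  simpa using ipAt_smul_left y 0 0 a

/-- The semi-inner product `⟨·, ·⟩(y)` as a Mathlib structure, which gives access to
Cauchy–Schwarz and to the triangle inequality. -/
@[reducible] def coreAt (X : Type) [TopologicalSpace X] (M : Type) [NormedAddCommGroup M]
    [NormedSpace ℂ M] [HilbertCzeroModule X M] (y : X) : PreInnerProductSpace.Core ℂ M where
  inner a b := ipAt y a b
  conj_inner_symm a b := ipAt_conj y a b
  re_inner_nonneg a := HilbertCzeroModule.minner_self_re_nonneg a y
  add_left := ipAt_add_left y
  smul_left a b k := ipAt_smul_left y k a b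

lemma nm_eq (y : X) (a : M) : nm y a = Real.sqrt (ipAt y a a).re := rfl

lemma nm_nonneg (y : X) (a : M) : 0 ≤ nm y a := Real.sqrt_nonneg _

lemma nm_sq (y : X) (a : M) : nm y a ^ 2 = (ipAt y a a).re :=
  Real.sq_sqrt (HilbertCzeroModule.minner_self_re_nonneg a y)

lemma nm_zero (y : X) : nm y (0 : M) = 0 := by simp [nm_eq, ipAt_zero_left]

lemma nm_add_le (y : X) (a b : M) : nm y (a + b) ≤ nm y a + nm y b :=
  @norm_add_le M
    (@InnerProductSpace.Core.toSeminormedAddCommGroup ℂ M _ _ _ (coreAt X M y)).toSeminormedAddGroup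
    a b

lemma nm_smul (y : X) (k : ℂ) (a : M) : nm y (k • a) = ‖k‖ * nm y a := by
  have h : (nm y (k • a)) ^ 2 = (‖k‖ * nm y a) ^ 2 := by
    rw [mul_pow, nm_sq, nm_sq, ipAt_smul_left, ipAt_smul_right, ← mul_assoc, Complex.conj_mul',
      ← Complex.ofReal_pow, Complex.re_ofReal_mul]
  exact (pow_left_inj₀ (nm_nonneg _ _) (mul_nonneg (norm_nonneg _) (nm_nonneg _ _)) two_ne_zero).1 h

lemma nm_neg (y : X) (a : M) : nm y (-a) = nm y a := by
  simpa using nm_smul y (-1) a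

lemma nm_sub_le (y : X) (a b : M) : nm y (a - b) ≤ nm y a + nm y b := by
  rw [sub_eq_add_neg, ← nm_neg y b]; exact nm_add_le _ _ _

lemma nm_sub_comm (y : X) (a b : M) : nm y (a - b) = nm y (b - a) := by
  rw [← nm_neg, neg_sub]

lemma nm_tri (y : X) (a b c : M) : nm y (a - c) ≤ nm y (a - b) + nm y (b - c) := by
  simpa using nm_add_le y (a - b) (b - c)

lemma nm_le_of_sub (y : X) (a b : M) : nm y a ≤ nm y b + nm y (a - b) := by
  simpa using nm_add_le y b (a - b)

lemma nm_congr {y : X} {a b : M} (h : nm y (a - b) = 0) : nm y a = nm y b := by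
  have h1 := nm_le_of_sub y a b
  have h2 := nm_le_of_sub y b a
  rw [nm_sub_comm] at h2
  linarith

lemma nm_le_norm (y : X) (a : M) : nm y a ≤ ‖a‖ := by
  rw [HilbertCzeroModule.norm_eq (Y := X) a]
  apply Real.sqrt_le_sqrt
  exact ((Complex.re_le_norm _).trans (BoundedContinuousFunction.norm_coe_le_norm
    (ZeroAtInftyContinuousMap.toBCF (HilbertCzeroModule.minner a a : C₀(X, ℂ))) y))

lemma norm_ipAt_self (y : X) (a : M) : ‖ipAt y a a‖ = nm y a ^ 2 := by
  have h : (ipAt y a a).im = 0 := HilbertCzeroModule.minner_self_im a y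
  rw [nm_sq, ← Complex.abs_re_eq_norm.2 h]
  exact abs_of_nonneg (HilbertCzeroModule.minner_self_re_nonneg a y)

variable (X) in
lemma norm_le_of_nm {a : M} {c : ℝ} (hc : 0 ≤ c) (h : ∀ y : X, nm y a ≤ c) : ‖a‖ ≤ c := by
  rw [HilbertCzeroModule.norm_eq (Y := X) a, Real.sqrt_le_left hc]
  refine (BoundedContinuousFunction.norm_le
    (f := ZeroAtInftyContinuousMap.toBCF (HilbertCzeroModule.minner a a : C₀(X, ℂ)))
    (by positivity)).2 fun y => ?_
  have := norm_ipAt_self y a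
  refine (this.le.trans ?_)
  exact pow_le_pow_left₀ (nm_nonneg _ _) (h y) 2

variable (X) in
lemma eq_zero_of_nm {a : M} (h : ∀ y : X, nm y a = 0) : a = 0 :=
  norm_le_zero_iff.1 (norm_le_of_nm X le_rfl fun y => (h y).le)

lemma continuous_nm (a : M) : Continuous fun y : X => nm y a :=
  Real.continuous_sqrt.comp (Complex.continuous_re.comp (map_continuous (modIP X a a)))

lemma tendsto_nm (a : M) : Tendsto (fun y : X => nm y a) (cocompact X) (𝓝 0) := by
  have h : Tendsto (fun y : X => modIP X a a y) (cocompact X) (𝓝 0) := zero_at_infty (modIP X a a)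
  have := (Real.continuous_sqrt.comp Complex.continuous_re).continuousAt.tendsto.comp h
  have e : (Real.sqrt ∘ Complex.re) 0 = 0 := by simp
  rw [e] at this
  exact this

lemma ipAt_modSMul_right (y : X) (a b : M) (f : C₀(X, ℂ)) :
    ipAt y a (modSMul X b f) = ipAt y a b * f y := by
  simp [ipAt, modIP, modSMul, HilbertCzeroModule.minner_msmul_right]

lemma ipAt_modSMul_left (y : X) (a b : M) (f : C₀(X, ℂ)) :
    ipAt y (modSMul X a f) b = ipAt y a b * conj (f y) := by
  rw [← ipAt_conj, ipAt_modSMul_right, map_mul, ipAt_conj]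

/-- In the fiber at `y`, the element `a · f` is `f(y) a`. -/
lemma nm_modSMul_sub_smul (y : X) (a : M) (f : C₀(X, ℂ)) :
    nm y (modSMul X a f - f y • a) = 0 := by
  have : ipAt y (modSMul X a f - f y • a) (modSMul X a f - f y • a) = 0 := by
    rw [sub_eq_add_neg, ← neg_one_smul ℂ (f y • a)]
    simp only [ipAt_add_left, ipAt_add_right, ipAt_smul_left, ipAt_smul_right,
      ipAt_modSMul_left, ipAt_modSMul_right]
    simp
    ring
  rw [nm_eq, this]; simp

lemma nm_modSMul (y : X) (a : M) (f : C₀(X, ℂ)) : nm y (modSMul X a f) = ‖f y‖ * nm y a := by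
  rw [nm_congr (nm_modSMul_sub_smul y a f), nm_smul]

lemma nm_modSMul_sub (y : X) (a : M) (f g : C₀(X, ℂ)) :
    nm y (modSMul X a f - modSMul X a g) = ‖f y - g y‖ * nm y a := by
  have h1 := nm_modSMul_sub_smul y a f
  have h2 := nm_modSMul_sub_smul y a g
  rw [← nm_smul]
  apply nm_congr
  have : modSMul X a f - modSMul X a g - (f y - g y) • a =
    (modSMul X a f - f y • a) - (modSMul X a g - g y • a) := by module
  rw [this]
  exact le_antisymm ((nm_sub_le _ _ _).trans (by rw [h1, h2]; simp)) (nm_nonneg _ _)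

lemma nm_sub_modSMul (y : X) (a : M) (f : C₀(X, ℂ)) :
    nm y (a - modSMul X a f) = ‖1 - f y‖ * nm y a := by
  have h1 := nm_modSMul_sub_smul y a f
  rw [← nm_smul]
  apply nm_congr
  have : a - modSMul X a f - (1 - f y) • a = -(modSMul X a f - f y • a) := by module
  rw [this, nm_neg, h1]

/-- The function `y ↦ φ(⟨a, a⟩(y)^{1/2})` in `C₀(X)`, for continuous `φ` with `φ 0 = 0`. -/
def calc0 (X : Type) [TopologicalSpace X] {M : Type} [NormedAddCommGroup M] [NormedSpace ℂ M]
    [HilbertCzeroModule X M] (a : M) (φ : ℝ → ℝ) (hφ : Continuous φ) (h0 : φ 0 = 0) :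
    C₀(X, ℂ) where
  toFun y := (φ (nm y a) : ℂ)
  continuous_toFun := Complex.continuous_ofReal.comp (hφ.comp (continuous_nm a))
  zero_at_infty' := by
    have := (Complex.continuous_ofReal.comp hφ).continuousAt.tendsto.comp (tendsto_nm (X := X) a)
    have e : (Complex.ofReal ∘ φ) 0 = 0 := by simp [h0]
    rw [e] at this
    exact this

lemma calc0_apply (a : M) (φ : ℝ → ℝ) (hφ : Continuous φ) (h0 : φ 0 = 0) (y : X) :
    calc0 X a φ hφ h0 y = (φ (nm y a) : ℂ) := rfl

/-- Every vector of the fiber at `y` has a representative whose module norm is at most twice its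
fiber norm. -/
lemma exists_small_rep (y : X) (a : M) : ∃ b : M, nm y (a - b) = 0 ∧ ‖b‖ ≤ 2 * nm y a := by
  rcases (nm_nonneg y a).eq_or_lt with h | hpos
  · exact ⟨0, by simp [← h], by simp [← h]⟩
  -- the cut-off `φ s = 2cs / (s² + c²)` satisfies `φ c = 1` and `s φ s ≤ 2c`
  set c := nm y a with hc
  have hd : ∀ s : ℝ, s ^ 2 + c ^ 2 ≠ 0 := fun s => by positivity
  have hφ : Continuous fun s : ℝ => 2 * c * s / (s ^ 2 + c ^ 2) := by
    fun_prop (disch := exact hd _)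
  refine ⟨modSMul X a (calc0 X a _ hφ (by simp)), ?_, ?_⟩
  · rw [nm_sub_modSMul, calc0_apply, ← hc]
    have : 2 * c * c / (c ^ 2 + c ^ 2) = 1 := by field_simp; norm_num
    rw [this]; simp
  · refine norm_le_of_nm X (by positivity) fun z => ?_
    rw [nm_modSMul, calc0_apply, Complex.norm_real, Real.norm_eq_abs]
    have hz := nm_nonneg z a
    rw [abs_of_nonneg (by positivity), div_mul_eq_mul_div, div_le_iff₀ (by positivity)]
    nlinarith [sq_nonneg c, mul_pos hpos hpos, mul_pos hpos (mul_pos hpos hpos)]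

/-- Fibers are complete: a sequence that is geometrically Cauchy in the fiber at `y` converges
there. -/
lemma exists_fiber_limit [CompleteSpace M] (y : X) (b : ℕ → M)
    (hb : ∀ n, nm y (b (n + 1) - b n) ≤ (1 / 2) ^ n) :
    ∃ x : M, Tendsto (fun n => nm y (x - b n)) atTop (𝓝 0) := by
  choose d hd0 hd using fun n => exists_small_rep y (b (n + 1) - b n)
  have hs : Summable d := by
    refine Summable.of_norm_bounded (g := fun n : ℕ => 2 * (1 / 2 : ℝ) ^ n)
      (summable_geometric_two.mul_left 2) fun n => (hd n).trans ?_
    have := hb n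
    linarith
  refine ⟨b 0 + ∑' n, d n, ?_⟩
  have hzero : ∀ n, nm y (b 0 + ∑ i ∈ Finset.range n, d i - b n) = 0 := by
    intro n
    induction n with
    | zero => simp [nm_zero]
    | succ n ih =>
      refine le_antisymm ?_ (nm_nonneg _ _)
      have : b 0 + ∑ i ∈ Finset.range (n + 1), d i - b (n + 1) =
          (b 0 + ∑ i ∈ Finset.range n, d i - b n) - (b (n + 1) - b n - d n) := by
        rw [Finset.sum_range_succ]; abel
      rw [this]
      refine (nm_sub_le _ _ _).trans ?_
      rw [ih, hd0]; simp
  have ht : Tendsto (fun n => ‖(∑' n, d n) - ∑ i ∈ Finset.range n, d i‖) atTop (𝓝 0) := by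
    have := (tendsto_const_nhds (x := ∑' n, d n)).sub hs.hasSum.tendsto_sum_nat
    simpa using this.norm
  refine squeeze_zero (fun n => nm_nonneg _ _) (fun n => ?_) ht
  refine (nm_tri y _ (b 0 + ∑ i ∈ Finset.range n, d i) _).trans ?_
  rw [hzero, add_zero]
  refine (nm_le_norm y _).trans (le_of_eq ?_)
  congr 1; abel

/-- The algebraic span `I_y M` is already the full null space of the seminorm at `y`. For
`nm y a = 0`, the factorization is `a = b · u` with `u = ⟨a, a⟩^{1/4}` and
`b = lim a · (u / (u² + δ²))` as `δ → 0`. -/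
lemma mem_fiberIdeal_iff [CompleteSpace M] (y : X) (a : M) :
    a ∈ fiberIdeal X M y ↔ nm y a = 0 := by
  constructor
  · intro h
    induction h using Submodule.span_induction with
    | mem x hx =>
      obtain ⟨f, p, hf, rfl⟩ := hx
      rw [nm_modSMul, hf]; simp
    | zero => exact nm_zero y
    | add a b _ _ ha hb =>
      exact le_antisymm ((nm_add_le _ _ _).trans (by rw [ha, hb]; simp)) (nm_nonneg _ _)
    | smul k a _ ha => rw [nm_smul, ha, mul_zero]
  · intro h
    let δ : ℕ → ℝ := fun n => 1 / ((n : ℝ) + 1)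
    have hδpos : ∀ n, 0 < δ n := fun n => Nat.one_div_pos_of_nat
    have hδ0 : Tendsto δ atTop (𝓝 0) := tendsto_one_div_add_atTop_nhds_zero_nat
    have hden : ∀ n (s : ℝ), |s| + δ n ^ 2 ≠ 0 := fun n s => by
      have := hδpos n; positivity
    have hφ : ∀ n, Continuous fun s : ℝ => Real.sqrt s / (|s| + δ n ^ 2) := fun n => by
      exact Real.continuous_sqrt.div (by fun_prop) (hden n)
    let u : C₀(X, ℂ) := calc0 X a Real.sqrt Real.continuous_sqrt Real.sqrt_zero
    let f : ℕ → C₀(X, ℂ) := fun n => calc0 X a _ (hφ n) (by simp)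
    let b : ℕ → M := fun n => modSMul X a (f n)
    have hf : ∀ n z, f n z = ((Real.sqrt (nm z a) / (nm z a + δ n ^ 2) : ℝ) : ℂ) := fun n z => by
      change ((Real.sqrt (nm z a) / (|nm z a| + δ n ^ 2) : ℝ) : ℂ) = _
      rw [abs_of_nonneg (nm_nonneg z a)]
    -- the fiber norm of `a · (u / (u² + δ²))` is within `δ` of `u`, uniformly on `X`
    have key : ∀ n (z : X), |Real.sqrt (nm z a) / (nm z a + δ n ^ 2) * nm z a - Real.sqrt (nm z a)|
        ≤ δ n := fun n z => by
      have hz := nm_nonneg z a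
      have hδ := hδpos n
      set w := Real.sqrt (nm z a)
      have hw : nm z a = w ^ 2 := (Real.sq_sqrt hz).symm
      have hw0 : 0 ≤ w := Real.sqrt_nonneg _
      have : w / (nm z a + δ n ^ 2) * nm z a - w = -(w * δ n ^ 2 / (w ^ 2 + δ n ^ 2)) := by
        rw [hw]; field_simp; ring
      rw [this, abs_neg, abs_of_nonneg (by positivity), div_le_iff₀ (by positivity)]
      nlinarith [mul_nonneg hδ.le (sq_nonneg (w - δ n)), mul_nonneg hδ.le (sq_nonneg w),
        mul_pos hδ (mul_pos hδ hδ)]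
    have hcau : CauchySeq b := by
      refine cauchySeq_of_le_tendsto_0 (fun N => 2 * δ N) (fun n m N hn hm => ?_)
        (by simpa using hδ0.const_mul 2)
      rw [dist_eq_norm]
      refine norm_le_of_nm X (by have := hδpos N; positivity) fun z => ?_
      have hn' : δ n ≤ δ N := Nat.one_div_le_one_div hn
      have hm' : δ m ≤ δ N := Nat.one_div_le_one_div hm
      have k1 := abs_le.1 (key n z)
      have k2 := abs_le.1 (key m z)
      rw [nm_modSMul_sub, hf, hf, ← Complex.ofReal_sub, Complex.norm_real, Real.norm_eq_abs,
        ← abs_of_nonneg (nm_nonneg z a), ← abs_mul, abs_of_nonneg (nm_nonneg z a), sub_mul]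
      exact abs_le.2 ⟨by linarith, by linarith⟩
    obtain ⟨c, hc⟩ := cauchySeq_tendsto_of_complete hcau
    have hac : a = modSMul X c u := by
      rw [← sub_eq_zero]
      refine eq_zero_of_nm X fun z => ?_
      have hz := nm_nonneg z a
      set w := Real.sqrt (nm z a) with hwdef
      have hw : nm z a = w ^ 2 := (Real.sq_sqrt hz).symm
      have hw0 : 0 ≤ w := Real.sqrt_nonneg _
      have huz : u z = (w : ℂ) := rfl
      have hlim : Tendsto (fun n => δ n ^ 2 + ‖b n - c‖ * w) atTop (𝓝 0) := by
        have h1 : Tendsto (fun n => ‖b n - c‖) atTop (𝓝 0) := tendsto_iff_norm_sub_tendsto_zero.1 hc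
        simpa using (hδ0.pow 2).add (h1.mul_const w)
      refine le_antisymm (ge_of_tendsto' hlim fun n => ?_) (nm_nonneg _ _)
      have e1 : nm z (a - modSMul X (b n) u) ≤ δ n ^ 2 := by
        have hδ := hδpos n
        have e : modSMul X (b n) u = modSMul X a (f n * u) :=
          HilbertCzeroModule.msmul_mul a (f n) u
        rw [e, nm_sub_modSMul, ZeroAtInftyContinuousMap.mul_apply, hf, huz, ← hwdef, hw]
        have : (1 : ℂ) - ((w / (w ^ 2 + δ n ^ 2) : ℝ) : ℂ) * (w : ℂ)
            = ((δ n ^ 2 / (w ^ 2 + δ n ^ 2) : ℝ) : ℂ) := by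
          rw [← Complex.ofReal_mul, ← Complex.ofReal_one, ← Complex.ofReal_sub]
          congr 1
          field_simp; ring
        rw [this, Complex.norm_real, Real.norm_eq_abs, abs_of_nonneg (by positivity),
          div_mul_eq_mul_div, div_le_iff₀ (by positivity)]
        nlinarith [mul_pos (pow_pos hδ 2) (pow_pos hδ 2)]
      have e2 : nm z (modSMul X (b n) u - modSMul X c u) ≤ ‖b n - c‖ * w := by
        have e : modSMul X (b n) u - modSMul X c u = modSMul X (b n - c) u := by
          have := HilbertCzeroModule.msmul_add_left (b n - c) c u
          rw [sub_add_cancel] at this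
          simp only [modSMul]
          rw [this, add_sub_cancel_right]
        rw [e, nm_modSMul, huz, Complex.norm_real, Real.norm_eq_abs, abs_of_nonneg hw0, mul_comm]
        exact mul_le_mul_of_nonneg_right (nm_le_norm _ _) hw0
      exact (nm_tri z _ (modSMul X (b n) u) _).trans (add_le_add e1 e2)
    rw [hac]
    exact Submodule.subset_span ⟨u, c, by simp [u, calc0_apply, h], rfl⟩

lemma fibMk_eq_iff [CompleteSpace M] (y : X) (a b : M) :
    fibMk X M y a = fibMk X M y b ↔ nm y (a - b) = 0 := by
  rw [← mem_fiberIdeal_iff]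
  exact Submodule.Quotient.eq _

lemma fibNormQ_mk [CompleteSpace M] (y : X) (a : M) : fibNormQ X M y (fibMk X M y a) = nm y a := by
  have : {r | ∃ p : M, fibMk X M y a = fibMk X M y p ∧ r = fibNormRep X M y p} = {nm y a} := by
    ext r
    constructor
    · rintro ⟨p, hp, rfl⟩
      exact (nm_congr ((fibMk_eq_iff y a p).1 hp)).symm
    · rintro rfl
      exact ⟨a, rfl, rfl⟩
  rw [fibNormQ, this, csInf_singleton]

lemma fibMk_add (y : X) (a b : M) : fibMk X M y (a + b) = fibMk X M y a + fibMk X M y b := rfl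

lemma fibMk_sub (y : X) (a b : M) : fibMk X M y (a - b) = fibMk X M y a - fibMk X M y b := rfl

lemma fibMk_smul (y : X) (k : ℂ) (a : M) : fibMk X M y (k • a) = k • fibMk X M y a := rfl

lemma fibMk_surjective (y : X) : Function.Surjective (fibMk X M y) :=
  Submodule.Quotient.mk_surjective _

lemma fcast_fibMk {y z : X} (h : y = z) (a : M) : fcast X M h (fibMk X M y a) = fibMk X M z a := by
  subst h; rfl

/-- The section `p̂` is continuous into the total space of the bundle. -/
lemma continuous_hatSec [CompleteSpace M] (a : M) :
    @Continuous X (TotalP X M) _ (topEP X M) fun y => ⟨y, fibMk X M y a⟩ := by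
  refine continuous_generateFrom_iff.2 ?_
  rintro _ ⟨U, p, ε, hU, -, rfl⟩
  have : (fun y => (⟨y, fibMk X M y a⟩ : TotalP X M)) ⁻¹'
      {e | e.1 ∈ U ∧ fibNormQ X M e.1 (e.2 - fibMk X M e.1 p) < ε} =
      U ∩ {y | nm y (a - p) < ε} := by
    ext y
    change y ∈ U ∧ fibNormQ X M y (fibMk X M y a - fibMk X M y p) < ε ↔ _
    rw [← fibMk_sub, fibNormQ_mk]
    rfl
  rw [this]
  exact hU.inter (isOpen_lt (continuous_nm _) continuous_const)

end FiberSeminorm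
/-! ### Unitary actions in terms of representatives -/

section ActionOnRepresentatives

variable {X : Type} [TopologicalSpace X] {Γ : LCGroupoid X}
  {M : Type} [NormedAddCommGroup M] [NormedSpace ℂ M] [HilbertCzeroModule X M]

/-- `g · p̂(s g) = p̂'(r g)`, as a relation between module elements. Working with representatives
avoids all transport between fibers over equal base points. -/
def ActRel (A : GAction Γ M) (g : Γ.G) (p p' : M) : Prop :=
  A.act g (fibMk X M (Γ.s g) p) = fibMk X M (Γ.r g) p'

variable {A : GAction Γ M} {g h : Γ.G} {p p' q q' : M}

lemma ActRel.exists_right (A : GAction Γ M) (g : Γ.G) (p : M) : ∃ p', ActRel A g p p' :=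
  (fibMk_surjective (Γ.r g) (A.act g (fibMk X M (Γ.s g) p))).imp fun _ => Eq.symm

lemma ActRel.exists_left (A : GAction Γ M) (g : Γ.G) (p' : M) : ∃ p, ActRel A g p p' := by
  obtain ⟨v, hv⟩ := A.act_surjective g (fibMk X M (Γ.r g) p')
  obtain ⟨p, rfl⟩ := fibMk_surjective (Γ.s g) v
  exact ⟨p, hv⟩

lemma ActRel.add (hp : ActRel A g p p') (hq : ActRel A g q q') :
    ActRel A g (p + q) (p' + q') := by
  unfold ActRel at *
  rw [fibMk_add, A.act_add, hp, hq, fibMk_add]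

lemma ActRel.smul (k : ℂ) (hp : ActRel A g p p') : ActRel A g (k • p) (k • p') := by
  unfold ActRel at *
  rw [fibMk_smul, A.act_csmul, hp, fibMk_smul]

lemma ActRel.nm_eq [CompleteSpace M] (hp : ActRel A g p p') : nm (Γ.r g) p' = nm (Γ.s g) p := by
  have := A.act_norm g (fibMk X M (Γ.s g) p)
  rwa [hp, fibNormQ_mk, fibNormQ_mk] at this

lemma re_ipAt_polarize (y : X) (a b : M) :
    2 * (ipAt y a b).re = nm y (a + b) ^ 2 - nm y a ^ 2 - nm y b ^ 2 := by
  rw [nm_sq, nm_sq, nm_sq, ipAt_add_left, ipAt_add_right, ipAt_add_right, ← ipAt_conj y b a]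
  simp
  ring

/-- By polarization, a norm-preserving linear action preserves inner products. -/
lemma ActRel.ipAt_eq [CompleteSpace M] (hp : ActRel A g p p') (hq : ActRel A g q q') :
    ipAt (Γ.s g) p q = ipAt (Γ.r g) p' q' := by
  have re : ∀ {q q' : M}, ActRel A g q q' →
      (ipAt (Γ.s g) p q).re = (ipAt (Γ.r g) p' q').re := by
    intro q q' hq
    have h1 := re_ipAt_polarize (Γ.s g) p q
    have h2 := re_ipAt_polarize (Γ.r g) p' q'
    rw [hp.nm_eq, hq.nm_eq, (hp.add hq).nm_eq] at h2
    linarith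
  apply Complex.ext (re hq)
  -- the imaginary part is the real part of the pairing with `I • q`
  have := re (hq.smul Complex.I)
  rw [ipAt_smul_right, ipAt_smul_right] at this
  simpa using this

lemma ActRel.unit (A : GAction Γ M) (y : X) (p : M) : ActRel A (Γ.unit y) p p := by
  have := A.act_unit y (fibMk X M y p)
  rwa [fcast_fibMk, fcast_fibMk] at this

lemma ActRel.mul (hc : Γ.s g = Γ.r h) (hp : ActRel A h p p') (hq : ActRel A g p' q) :
    ActRel A (Γ.mul g h) p q := by
  have := A.act_mul g h hc (fibMk X M (Γ.s h) p)
  unfold ActRel at *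
  rwa [fcast_fibMk, hp, fcast_fibMk, hq, fcast_fibMk] at this

lemma ActRel.eventually [CompleteSpace M] {g₀ : Γ.G} (hp : ActRel A g₀ p p') {δ : ℝ} (hδ : 0 < δ) :
    ∀ᶠ g in 𝓝 g₀, ∀ pg, ActRel A g p pg → nm (Γ.r g) (pg - p') < δ := by
  let : TopologicalSpace (TotalP X M) := topEP X M
  have c1 : Continuous fun g : Γ.G => ((⟨Γ.s g, fibMk X M (Γ.s g) p⟩ : TotalP X M)) :=
    (continuous_hatSec p).comp Γ.s_cont
  have c2 : Continuous fun g : Γ.G =>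
      (⟨(g, ⟨Γ.s g, fibMk X M (Γ.s g) p⟩), rfl⟩ :
        {q : Γ.G × TotalP X M // Γ.s q.1 = q.2.1}) :=
    (continuous_id.prodMk c1).subtype_mk _
  have c3 : Continuous fun g : Γ.G =>
      (⟨Γ.r g, A.act g (fibMk X M (Γ.s g) p)⟩ : TotalP X M) := A.act_cont.comp c2
  have ho : IsOpen {e : TotalP X M | e.1 ∈ (Set.univ : Set X) ∧
      fibNormQ X M e.1 (e.2 - fibMk X M e.1 p') < δ} :=
    TopologicalSpace.isOpen_generateFrom_of_mem ⟨Set.univ, p', δ, isOpen_univ, hδ, rfl⟩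
  have hev : ∀ᶠ g in 𝓝 g₀, _ := (ho.preimage c3).mem_nhds (x := g₀) (by
    refine ⟨trivial, ?_⟩
    change fibNormQ X M (Γ.r g₀) (A.act g₀ (fibMk X M (Γ.s g₀) p) - fibMk X M (Γ.r g₀) p') < δ
    rw [hp, ← fibMk_sub, fibNormQ_mk, sub_self, nm_zero]
    exact hδ)
  filter_upwards [hev] with g hg pg hpg
  have h2 : fibNormQ X M (Γ.r g)
    (A.act g (fibMk X M (Γ.s g) p) - fibMk X M (Γ.r g) p') < δ := hg.2
  rwa [hpg, ← fibMk_sub, fibNormQ_mk] at h2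

end ActionOnRepresentatives

/-! ### Extension of densely defined isometries between fibers -/

section Extension

variable {X : Type} [TopologicalSpace X]
  {M : Type} [NormedAddCommGroup M] [NormedSpace ℂ M] [HilbertCzeroModule X M]

/-- Extension by continuity: an isometric relation from the fiber at `y` to the fiber at `z` with
dense domain has a closure which is defined everywhere. -/
lemma exists_extension [CompleteSpace M] (y z : X) (S : M → M → Prop)
    (hiso : ∀ a b a' b', S a b → S a' b' → nm z (b' - b) = nm y (a' - a))
    (hdense : ∀ (x : M) (ε : ℝ), 0 < ε → ∃ a b, S a b ∧ nm y (x - a) < ε) (x : M) :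
    ∃ x' : M, ∀ ε : ℝ, 0 < ε → ∃ a b, S a b ∧ nm y (x - a) < ε ∧ nm z (x' - b) < ε := by
  choose a b hS ha using fun n : ℕ => hdense x ((1 / 2) ^ n / 2) (by positivity)
  obtain ⟨x', hx'⟩ := exists_fiber_limit z b fun n => by
    rw [hiso _ _ _ _ (hS n) (hS (n + 1))]
    have h1 := ha n
    have h2 := ha (n + 1)
    have h3 := nm_tri y (a (n + 1)) x (a n)
    rw [nm_sub_comm y (a (n + 1)) x] at h3
    have h4 : (0 : ℝ) < (1 / 2) ^ n := by positivity
    rw [pow_succ] at h2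
    linarith
  refine ⟨x', fun ε hε => ?_⟩
  have hpow : Tendsto (fun n : ℕ => ((1 : ℝ) / 2) ^ n / 2) atTop (𝓝 0) := by
    simpa using (tendsto_pow_atTop_nhds_zero_of_lt_one (r := (1 : ℝ) / 2) (by norm_num)
      (by norm_num)).div_const 2
  obtain ⟨n, h1, h2⟩ := ((hx'.eventually_lt_const hε).and (hpow.eventually_lt_const hε)).exists
  exact ⟨a n, b n, hS n, (ha n).trans h2, h1⟩

end Extension

/-! ### The diagonal action on the tensor product -/

section Tensor

variable {X : Type} [TopologicalSpace X] {Γ : LCGroupoid X}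
  {M : Type} [NormedAddCommGroup M] [NormedSpace ℂ M] [HilbertCzeroModule X M]
  {N : Type} [NormedAddCommGroup N] [NormedSpace ℂ N] [HilbertCzeroModule X N]
  {T : Type} [NormedAddCommGroup T] [NormedSpace ℂ T] [HilbertCzeroModule X T]

lemma ipAt_t (td : TensorData X M N T) (y : X) (p p' : M) (q q' : N) :
    ipAt y (td.t p q) (td.t p' q') = ipAt y p p' * ipAt y q q' := by
  simp [ipAt, td.t_inner]

lemma nm_t (td : TensorData X M N T) (y : X) (p : M) (q : N) :
    nm y (td.t p q) = nm y p * nm y q := by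
  have : nm y (td.t p q) ^ 2 = (nm y p * nm y q) ^ 2 := by
    rw [mul_pow, ← norm_ipAt_self, ← norm_ipAt_self, ← norm_ipAt_self, ipAt_t, norm_mul]
  exact (pow_left_inj₀ (nm_nonneg _ _) (mul_nonneg (nm_nonneg _ _) (nm_nonneg _ _)) two_ne_zero).1
    this

lemma nm_t_sub_le (td : TensorData X M N T) (y : X) (p p' : M) (q q' : N) :
    nm y (td.t p q - td.t p' q') ≤ nm y (p - p') * nm y q + nm y p' * nm y (q - q') := by
  have e1 := td.t_add_left (p - p') p' q
  have e2 := td.t_add_right p' (q - q') q'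
  rw [sub_add_cancel] at e1 e2
  have : td.t p q - td.t p' q' = td.t (p - p') q + td.t p' (q - q') := by
    rw [e1, e2]; abel
  rw [this, ← nm_t td, ← nm_t td]
  exact nm_add_le _ _ _

/-- The graph of the diagonal action of `g` on finite sums of elementary tensors: the span of the
pairs `(p ⊗ q, p' ⊗ q')` with `g p = p'` and `g q = q'` on fibers. -/
def diagGraph (td : TensorData X M N T) (A : GAction Γ M) (B : GAction Γ N) (g : Γ.G) :
    Submodule ℂ (T × T) :=
  Submodule.span ℂ {x | ∃ p p' q q', ActRel A g p p' ∧ ActRel B g q q' ∧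
    x = (td.t p q, td.t p' q')}

variable {td : TensorData X M N T} {A : GAction Γ M} {B : GAction Γ N} {g h : Γ.G}

lemma diagGraph_mem {p p' : M} {q q' : N} (hp : ActRel A g p p') (hq : ActRel B g q q') :
    (td.t p q, td.t p' q') ∈ diagGraph td A B g :=
  Submodule.subset_span ⟨p, p', q, q', hp, hq, rfl⟩

lemma diagGraph_sum_mem {n : ℕ} {ps ps' : Fin n → M} {qs qs' : Fin n → N}
    (hps : ∀ i, ActRel A g (ps i) (ps' i)) (hqs : ∀ i, ActRel B g (qs i) (qs' i)) :
    (∑ i, td.t (ps i) (qs i), ∑ i, td.t (ps' i) (qs' i)) ∈ diagGraph td A B g := by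
  have := (diagGraph td A B g).sum_mem (t := Finset.univ)
    fun i _ => diagGraph_mem (td := td) (hps i) (hqs i)
  have e : ∑ i, (td.t (ps i) (qs i), td.t (ps' i) (qs' i)) =
      (∑ i, td.t (ps i) (qs i), ∑ i, td.t (ps' i) (qs' i)) :=
    Prod.ext Prod.fst_sum Prod.snd_sum
  rwa [e] at this

lemma diagGraph_ipAt [CompleteSpace M] [CompleteSpace N] {x y : T × T}
    (hx : x ∈ diagGraph td A B g) (hy : y ∈ diagGraph td A B g) :
    ipAt (Γ.s g) x.1 y.1 = ipAt (Γ.r g) x.2 y.2 := by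
  unfold diagGraph at hx hy
  induction hx, hy using Submodule.span_induction₂ with
  | mem_mem x y hx hy =>
    obtain ⟨p, p', q, q', hp, hq, rfl⟩ := hx
    obtain ⟨a, a', b, b', ha, hb, rfl⟩ := hy
    rw [ipAt_t, ipAt_t, hp.ipAt_eq ha, hq.ipAt_eq hb]
  | zero_left => simp [ipAt_zero_left]
  | zero_right => simp [ipAt_zero_right]
  | add_left x y z _ _ _ h1 h2 => simp [ipAt_add_left, h1, h2]
  | add_right x y z _ _ _ h1 h2 => simp [ipAt_add_right, h1, h2]
  | smul_left k x y _ _ h1 => simp [ipAt_smul_left, h1]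
  | smul_right k x y _ _ h1 => simp [ipAt_smul_right, h1]

lemma diagGraph_nm [CompleteSpace M] [CompleteSpace N] {x : T × T}
    (hx : x ∈ diagGraph td A B g) : nm (Γ.r g) x.2 = nm (Γ.s g) x.1 := by
  rw [nm_eq, nm_eq, diagGraph_ipAt hx hx]

lemma diagGraph_dense_left (td : TensorData X M N T) (A : GAction Γ M) (B : GAction Γ N)
    (g : Γ.G) (x : T) {ε : ℝ} (hε : 0 < ε) :
    ∃ a b, (a, b) ∈ diagGraph td A B g ∧ nm (Γ.s g) (x - a) < ε := by
  obtain ⟨n, ps, qs, hx⟩ := td.t_dense x ε hε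
  choose ps' hps using fun i => ActRel.exists_right A g (ps i)
  choose qs' hqs using fun i => ActRel.exists_right B g (qs i)
  refine ⟨∑ i, td.t (ps i) (qs i), ∑ i, td.t (ps' i) (qs' i), ?_, (nm_le_norm _ _).trans_lt hx⟩
  exact diagGraph_sum_mem hps hqs

lemma diagGraph_dense_right (td : TensorData X M N T) (A : GAction Γ M) (B : GAction Γ N)
    (g : Γ.G) (x : T) {ε : ℝ} (hε : 0 < ε) :
    ∃ a b, (a, b) ∈ diagGraph td A B g ∧ nm (Γ.r g) (x - b) < ε := by
  obtain ⟨n, ps', qs', hx⟩ := td.t_dense x ε hε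
  choose ps hps using fun i => ActRel.exists_left A g (ps' i)
  choose qs hqs using fun i => ActRel.exists_left B g (qs' i)
  refine ⟨∑ i, td.t (ps i) (qs i), ∑ i, td.t (ps' i) (qs' i), ?_, (nm_le_norm _ _).trans_lt hx⟩
  exact diagGraph_sum_mem hps hqs

lemma diagGraph_unit (td : TensorData X M N T) (A : GAction Γ M) (B : GAction Γ N) (y z : X)
    (x : T) {ε : ℝ} (hε : 0 < ε) :
    ∃ a, (a, a) ∈ diagGraph td A B (Γ.unit y) ∧ nm z (x - a) < ε := by
  obtain ⟨n, ps, qs, hx⟩ := td.t_dense x ε hε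
  refine ⟨∑ i, td.t (ps i) (qs i), ?_, (nm_le_norm _ _).trans_lt hx⟩
  exact diagGraph_sum_mem (fun i => ActRel.unit A y (ps i)) fun i => ActRel.unit B y (qs i)

lemma diagGraph_mul (hc : Γ.s g = Γ.r h) {x : T × T} (hx : x ∈ diagGraph td A B h) :
    ∃ c, (x.2, c) ∈ diagGraph td A B g ∧ (x.1, c) ∈ diagGraph td A B (Γ.mul g h) := by
  unfold diagGraph at hx
  induction hx using Submodule.span_induction with
  | mem x hx =>
    obtain ⟨p, p', q, q', hp, hq, rfl⟩ := hx
    obtain ⟨p'', hp'⟩ := ActRel.exists_right A g p'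
    obtain ⟨q'', hq'⟩ := ActRel.exists_right B g q'
    exact ⟨td.t p'' q'', diagGraph_mem hp' hq', diagGraph_mem (hp.mul hc hp') (hq.mul hc hq')⟩
  | zero => exact ⟨0, Submodule.zero_mem _, Submodule.zero_mem _⟩
  | add x y _ _ hx hy =>
    obtain ⟨c, h1, h2⟩ := hx
    obtain ⟨d, h3, h4⟩ := hy
    exact ⟨c + d, Submodule.add_mem _ h1 h3, Submodule.add_mem _ h2 h4⟩
  | smul k x _ hx =>
    obtain ⟨c, h1, h2⟩ := hx
    exact ⟨k • c, Submodule.smul_mem _ k h1, Submodule.smul_mem _ k h2⟩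

/-- Continuity of the diagonal action along the section of a fixed finite sum of elementary
tensors. -/
lemma diagGraph_eventually [CompleteSpace M] [CompleteSpace N] {g₀ : Γ.G} {x : T × T}
    (hx : x ∈ diagGraph td A B g₀) : ∀ {δ : ℝ}, 0 < δ →
    ∀ᶠ g in 𝓝 g₀, ∃ c, (x.1, c) ∈ diagGraph td A B g ∧ nm (Γ.r g) (c - x.2) < δ := by
  unfold diagGraph at hx
  induction hx using Submodule.span_induction with
  | mem x hx =>
    intro δ hδ
    obtain ⟨p, p', q, q', hp, hq, rfl⟩ := hx
    set K := ‖q‖ + ‖p'‖ + 1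
    have hK : 0 < K := by positivity
    have hη : 0 < δ / K := by positivity
    filter_upwards [hp.eventually hη, hq.eventually hη] with g h1 h2
    obtain ⟨a, ha⟩ := ActRel.exists_right A g p
    obtain ⟨b, hb⟩ := ActRel.exists_right B g q
    refine ⟨td.t a b, diagGraph_mem ha hb, ?_⟩
    have ha' := (h1 a ha).le
    have hb' := (h2 b hb).le
    have hbq : nm (Γ.r g) b ≤ ‖q‖ := hb.nm_eq.le.trans (nm_le_norm _ _)
    have hp' := nm_le_norm (Γ.r g) p'
    calc nm (Γ.r g) (td.t a b - td.t p' q')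
        ≤ nm (Γ.r g) (a - p') * nm (Γ.r g) b + nm (Γ.r g) p' * nm (Γ.r g) (b - q') :=
          nm_t_sub_le _ _ _ _ _ _
      _ ≤ δ / K * ‖q‖ + ‖p'‖ * (δ / K) := by
          gcongr
          · exact nm_nonneg _ _
          · exact nm_nonneg _ _
      _ < δ / K * K := by
          simp only [K] at hη ⊢
          linarith
      _ = δ := by field_simp
  | zero =>
    intro δ hδ
    exact Eventually.of_forall fun g => ⟨0, Submodule.zero_mem _, by simpa [nm_zero] using hδ⟩
  | add x y _ _ hx hy =>
    intro δ hδ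
    filter_upwards [hx (half_pos hδ), hy (half_pos hδ)] with g h1 h2
    obtain ⟨c, hc, hc'⟩ := h1
    obtain ⟨d, hd, hd'⟩ := h2
    refine ⟨c + d, Submodule.add_mem _ hc hd, ?_⟩
    have e : c + d - (x + y).2 = (c - x.2) + (d - y.2) := by
      rw [Prod.snd_add]; abel
    rw [e]
    linarith [nm_add_le (Γ.r g) (c - x.2) (d - y.2)]
  | smul k x _ hx =>
    intro δ hδ
    have hk : 0 < ‖k‖ + 1 := by positivity
    filter_upwards [hx (div_pos hδ hk)] with g h1
    obtain ⟨c, hc, hc'⟩ := h1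
    refine ⟨k • c, Submodule.smul_mem _ k hc, ?_⟩
    change nm (Γ.r g) (k • c - k • x.2) < δ
    rw [← smul_sub, nm_smul]
    rw [lt_div_iff₀ hk] at hc'
    linarith [nm_nonneg (Γ.r g) (c - x.2)]

/-- The closure of the diagonal graph in the product of the fibers at `s g` and `r g`, as a
relation between representatives. It is the graph of the diagonal action on the tensor product. -/
def DiagRel (td : TensorData X M N T) (A : GAction Γ M) (B : GAction Γ N) (g : Γ.G)
    (x x' : T) : Prop :=
  ∀ ε : ℝ, 0 < ε → ∃ a b, (a, b) ∈ diagGraph td A B g ∧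
    nm (Γ.s g) (x - a) < ε ∧ nm (Γ.r g) (x' - b) < ε

lemma DiagRel.of_mem {x x' : T} (hx : (x, x') ∈ diagGraph td A B g) : DiagRel td A B g x x' :=
  fun ε hε => ⟨x, x', hx, by simpa [nm_zero] using hε, by simpa [nm_zero] using hε⟩

lemma DiagRel.add {x x' y y' : T} (hx : DiagRel td A B g x x') (hy : DiagRel td A B g y y') :
    DiagRel td A B g (x + y) (x' + y') := by
  intro ε hε
  obtain ⟨a, b, h1, h2, h3⟩ := hx _ (half_pos hε)
  obtain ⟨c, d, h4, h5, h6⟩ := hy _ (half_pos hε)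
  refine ⟨a + c, b + d, Submodule.add_mem _ h1 h4, ?_, ?_⟩
  · rw [add_sub_add_comm]
    linarith [nm_add_le (Γ.s g) (x - a) (y - c)]
  · rw [add_sub_add_comm]
    linarith [nm_add_le (Γ.r g) (x' - b) (y' - d)]

lemma DiagRel.smul {x x' : T} (k : ℂ) (hx : DiagRel td A B g x x') :
    DiagRel td A B g (k • x) (k • x') := by
  intro ε hε
  have hk : 0 < ‖k‖ + 1 := by positivity
  obtain ⟨a, b, h1, h2, h3⟩ := hx _ (div_pos hε hk)
  rw [lt_div_iff₀ hk] at h2 h3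
  refine ⟨k • a, k • b, Submodule.smul_mem _ k h1, ?_, ?_⟩
  · rw [← smul_sub, nm_smul]
    linarith [nm_nonneg (Γ.s g) (x - a)]
  · rw [← smul_sub, nm_smul]
    linarith [nm_nonneg (Γ.r g) (x' - b)]

lemma DiagRel.sub {x x' y y' : T} (hx : DiagRel td A B g x x') (hy : DiagRel td A B g y y') :
    DiagRel td A B g (x - y) (x' - y') := by
  have := hx.add (hy.smul (-1))
  simpa [sub_eq_add_neg] using this

lemma DiagRel.nm_eq [CompleteSpace M] [CompleteSpace N] {x x' : T} (hx : DiagRel td A B g x x') :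
    nm (Γ.r g) x' = nm (Γ.s g) x := by
  apply le_antisymm
  all_goals
    refine le_of_forall_pos_le_add fun ε hε => ?_
    obtain ⟨a, b, h1, h2, h3⟩ := hx _ (half_pos hε)
    have e1 : nm (Γ.r g) b = nm (Γ.s g) a := diagGraph_nm h1
    have e2 := nm_le_of_sub (Γ.r g) x' b
    have e3 := nm_le_of_sub (Γ.r g) b x'
    have e4 := nm_le_of_sub (Γ.s g) x a
    have e5 := nm_le_of_sub (Γ.s g) a x
    rw [nm_sub_comm] at e3 e5
    linarith

lemma DiagRel.exists_right [CompleteSpace M] [CompleteSpace N] [CompleteSpace T]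
    (td : TensorData X M N T) (A : GAction Γ M) (B : GAction Γ N) (g : Γ.G) (x : T) :
    ∃ x', DiagRel td A B g x x' :=
  exists_extension (Γ.s g) (Γ.r g) (fun a b => (a, b) ∈ diagGraph td A B g)
    (fun _ _ _ _ h1 h2 => diagGraph_nm (Submodule.sub_mem _ h2 h1))
    (fun x _ hε => diagGraph_dense_left td A B g x hε) x

lemma DiagRel.exists_left [CompleteSpace M] [CompleteSpace N] [CompleteSpace T]
    (td : TensorData X M N T) (A : GAction Γ M) (B : GAction Γ N) (g : Γ.G) (x' : T) :
    ∃ x, DiagRel td A B g x x' := by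
  obtain ⟨x, hx⟩ := exists_extension (Γ.r g) (Γ.s g) (fun b a => (a, b) ∈ diagGraph td A B g)
    (fun _ _ _ _ h1 h2 => (diagGraph_nm (Submodule.sub_mem _ h2 h1)).symm)
    (fun x _ hε => by
      obtain ⟨a, b, h1, h2⟩ := diagGraph_dense_right td A B g x hε
      exact ⟨b, a, h1, h2⟩) x'
  refine ⟨x, fun ε hε => ?_⟩
  obtain ⟨b, a, h1, h2, h3⟩ := hx ε hε
  exact ⟨a, b, h1, h3, h2⟩

lemma DiagRel.unit (td : TensorData X M N T) (A : GAction Γ M) (B : GAction Γ N) (y : X) (x : T) :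
    DiagRel td A B (Γ.unit y) x x := by
  intro ε hε
  obtain ⟨a, h1, h2⟩ := diagGraph_unit td A B y y x hε
  exact ⟨a, a, h1, by rwa [Γ.s_unit], by rwa [Γ.r_unit]⟩

lemma DiagRel.mul [CompleteSpace M] [CompleteSpace N] (hc : Γ.s g = Γ.r h) {x x' x'' : T}
    (h1 : DiagRel td A B h x x') (h2 : DiagRel td A B g x' x'') :
    DiagRel td A B (Γ.mul g h) x x'' := by
  intro ε hε
  obtain ⟨a, b, hab, ha, hb⟩ := h1 ε hε
  obtain ⟨c, hbc, hac⟩ := diagGraph_mul (g := g) hc hab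
  refine ⟨a, c, hac, by rwa [Γ.s_mul g h hc], ?_⟩
  rw [Γ.r_mul g h hc, (h2.sub (DiagRel.of_mem hbc)).nm_eq, hc]
  exact hb

/-- `DiagRel` descends to the fibers, in both variables. -/
lemma DiagRel.fibMk_eq [CompleteSpace M] [CompleteSpace N] [CompleteSpace T] {x y x' y' : T}
    (hx : DiagRel td A B g x x') (hy : DiagRel td A B g y y')
    (h : fibMk X T (Γ.s g) x = fibMk X T (Γ.s g) y) :
    fibMk X T (Γ.r g) x' = fibMk X T (Γ.r g) y' := by
  rw [fibMk_eq_iff] at h ⊢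
  rw [(hx.sub hy).nm_eq, h]

/-- The diagonal action of `g` on the fibers of the tensor product. -/
def diagAct [CompleteSpace M] [CompleteSpace N] [CompleteSpace T] (td : TensorData X M N T)
    (A : GAction Γ M) (B : GAction Γ N) (g : Γ.G) (v : Fib X T (Γ.s g)) : Fib X T (Γ.r g) :=
  fibMk X T (Γ.r g) (DiagRel.exists_right td A B g (fibMk_surjective (Γ.s g) v).choose).choose

variable [CompleteSpace M] [CompleteSpace N] [CompleteSpace T]

lemma DiagRel.diagAct_eq {x x' : T} (hx : DiagRel td A B g x x') :
    diagAct td A B g (fibMk X T (Γ.s g) x) = fibMk X T (Γ.r g) x' :=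
  DiagRel.fibMk_eq (DiagRel.exists_right td A B g
    (fibMk_surjective (Γ.s g) (fibMk X T (Γ.s g) x)).choose).choose_spec hx
    (fibMk_surjective (Γ.s g) (fibMk X T (Γ.s g) x)).choose_spec

/-- Joint continuity of the diagonal action. Near `(g₀, e₀)`, replace `e₀` by a finite sum `a` of
elementary tensors, with image `b` under `g₀`; unitarity controls the error, and the image of the
section `a` under `g` stays close to `b` by `diagGraph_eventually`. -/
lemma continuous_diagAct (td : TensorData X M N T) (A : GAction Γ M) (B : GAction Γ N) :
    @Continuous {q : Γ.G × TotalP X T // Γ.s q.1 = q.2.1} (TotalP X T)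
      (@instTopologicalSpaceSubtype _ _ (@instTopologicalSpaceProd _ _ _ (topEP X T)))
      (topEP X T)
      (fun q => ⟨Γ.r q.1.1, diagAct td A B q.1.1 (fcast X T q.2.symm q.1.2.2)⟩) := by
  let : TopologicalSpace (TotalP X T) := topEP X T
  refine continuous_generateFrom_iff.2 ?_
  rintro _ ⟨U, z, ε, hU, hε, rfl⟩
  refine isOpen_iff_mem_nhds.2 ?_
  rintro ⟨⟨g₀, ⟨y₀, v₀⟩⟩, hgy⟩ hmem
  change Γ.s g₀ = y₀ at hgy
  subst hgy
  obtain ⟨x, rfl⟩ := fibMk_surjective (Γ.s g₀) v₀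
  obtain ⟨x', hx⟩ := DiagRel.exists_right td A B g₀ x
  have hU₀ : Γ.r g₀ ∈ U := hmem.1
  have hlt : fibNormQ X T (Γ.r g₀)
    (diagAct td A B g₀ (fibMk X T (Γ.s g₀) x) - fibMk X T (Γ.r g₀) z) < ε := hmem.2
  rw [hx.diagAct_eq, ← fibMk_sub, fibNormQ_mk] at hlt
  obtain ⟨δ, hδ, hδε⟩ : ∃ δ : ℝ, 0 < δ ∧ nm (Γ.r g₀) (x' - z) + 3 * δ < ε :=
    ⟨(ε - nm (Γ.r g₀) (x' - z)) / 4, by linarith, by linarith⟩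
  obtain ⟨a, b, hab, hxa, hxb⟩ := hx δ hδ
  have hbz : nm (Γ.r g₀) (b - z) < ε - 2 * δ := by
    have := nm_tri (Γ.r g₀) b x' z
    rw [nm_sub_comm _ b x'] at this
    linarith
  have ev1 : ∀ᶠ g in 𝓝 g₀, Γ.r g ∈ U := (hU.preimage Γ.r_cont).mem_nhds hU₀
  have ev2 : ∀ᶠ g in 𝓝 g₀, nm (Γ.r g) (b - z) < ε - 2 * δ :=
    (((continuous_nm (b - z)).comp Γ.r_cont).tendsto g₀).eventually_lt_const hbz
  have ev3 := diagGraph_eventually hab hδ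
  have ho : IsOpen {e : TotalP X T | e.1 ∈ (Set.univ : Set X) ∧
      fibNormQ X T e.1 (e.2 - fibMk X T e.1 a) < δ} :=
    TopologicalSpace.isOpen_generateFrom_of_mem ⟨Set.univ, a, δ, isOpen_univ, hδ, rfl⟩
  have ev4 := ho.mem_nhds (x := ⟨Γ.s g₀, fibMk X T (Γ.s g₀) x⟩) (by
    refine ⟨trivial, ?_⟩
    change fibNormQ X T (Γ.s g₀) (fibMk X T (Γ.s g₀) x - fibMk X T (Γ.s g₀) a) < δ
    rw [← fibMk_sub, fibNormQ_mk]
    exact hxa)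
  have hsub := (continuous_subtype_val (p := fun q : Γ.G × TotalP X T => Γ.s q.1 = q.2.1)).tendsto
    ⟨(g₀, ⟨Γ.s g₀, fibMk X T (Γ.s g₀) x⟩), rfl⟩
  have evG := hsub.eventually (continuous_fst.tendsto _ |>.eventually (ev1.and (ev2.and ev3)))
  have evE := hsub.eventually (continuous_snd.tendsto _ |>.eventually ev4)
  filter_upwards [evG, evE]
  rintro ⟨⟨g, ⟨y, v⟩⟩, hgy⟩ ⟨h1, h2, c, hac, hcb⟩ h4
  change Γ.s g = y at hgy
  subst hgy
  obtain ⟨w, rfl⟩ := fibMk_surjective (Γ.s g) v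
  have hwa : fibNormQ X T (Γ.s g) (fibMk X T (Γ.s g) w - fibMk X T (Γ.s g) a) < δ := h4.2
  rw [← fibMk_sub, fibNormQ_mk] at hwa
  obtain ⟨w', hw⟩ := DiagRel.exists_right td A B g w
  refine ⟨h1, ?_⟩
  change fibNormQ X T (Γ.r g)
    (diagAct td A B g (fibMk X T (Γ.s g) w) - fibMk X T (Γ.r g) z) < ε
  rw [hw.diagAct_eq, ← fibMk_sub, fibNormQ_mk]
  dsimp only at h2 hcb
  have e1 : nm (Γ.r g) (w' - c) < δ := by
    rw [(hw.sub (DiagRel.of_mem hac)).nm_eq]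
    exact hwa
  have e2 := nm_tri (Γ.r g) w' c z
  have e3 := nm_tri (Γ.r g) c b z
  linarith

/-- The diagonal action as a continuous unitary action on the bundle of the tensor product. -/
def diagAction (td : TensorData X M N T) (A : GAction Γ M) (B : GAction Γ N) : GAction Γ T where
  act := diagAct td A B
  act_add g v w := by
    obtain ⟨x, rfl⟩ := fibMk_surjective (Γ.s g) v
    obtain ⟨y, rfl⟩ := fibMk_surjective (Γ.s g) w
    obtain ⟨x', hx⟩ := DiagRel.exists_right td A B g x
    obtain ⟨y', hy⟩ := DiagRel.exists_right td A B g y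
    rw [← fibMk_add, (hx.add hy).diagAct_eq, hx.diagAct_eq, hy.diagAct_eq, fibMk_add]
  act_csmul g k v := by
    obtain ⟨x, rfl⟩ := fibMk_surjective (Γ.s g) v
    obtain ⟨x', hx⟩ := DiagRel.exists_right td A B g x
    rw [← fibMk_smul, (hx.smul k).diagAct_eq, hx.diagAct_eq, fibMk_smul]
  act_norm g v := by
    obtain ⟨x, rfl⟩ := fibMk_surjective (Γ.s g) v
    obtain ⟨x', hx⟩ := DiagRel.exists_right td A B g x
    rw [hx.diagAct_eq, fibNormQ_mk, fibNormQ_mk, hx.nm_eq]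
  act_surjective g v := by
    obtain ⟨x', rfl⟩ := fibMk_surjective (Γ.r g) v
    obtain ⟨x, hx⟩ := DiagRel.exists_left td A B g x'
    exact ⟨fibMk X T (Γ.s g) x, hx.diagAct_eq⟩
  act_unit y v := by
    obtain ⟨x, rfl⟩ := fibMk_surjective y v
    rw [fcast_fibMk, fcast_fibMk, (DiagRel.unit td A B y x).diagAct_eq]
  act_mul g h hc v := by
    obtain ⟨x, rfl⟩ := fibMk_surjective (Γ.s h) v
    obtain ⟨x', hx⟩ := DiagRel.exists_right td A B h x
    obtain ⟨x'', hx'⟩ := DiagRel.exists_right td A B g x'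
    rw [fcast_fibMk, (DiagRel.mul hc hx hx').diagAct_eq, hx.diagAct_eq, fcast_fibMk,
      hx'.diagAct_eq, fcast_fibMk]
  act_cont := continuous_diagAct td A B

lemma isDiagonalAction_diagAction (td : TensorData X M N T) (A : GAction Γ M) (B : GAction Γ N) :
    IsDiagonalAction td A B (diagAction td A B) := fun _ _ _ _ _ hp hq =>
  (DiagRel.of_mem (diagGraph_mem hp hq)).diagAct_eq

end Tensor

/-- **Proposition 2.7.**  If `P` and `Q` are pre-`G`-Hilbert `C₀(Y)`-modules (dense
`G`-invariant pre-Hilbert submodules `P₀ ⊆ P`, `Q₀ ⊆ Q` of `G`-Hilbert modules), then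
the tensor product `P ⊗_{C₀(Y)} Q` is a `G`-Hilbert module for the diagonal action:
there is a continuous unitary `G`-action on `E_{P⊗Q}` acting diagonally on elementary
tensors. -/
theorem tensor_product_is_G_hilbert_module
    (Y : Type) [TopologicalSpace Y] [T2Space Y] [LocallyCompactSpace Y]
    [SecondCountableTopology Y] (Gp : LCGroupoid Y)
    (P : Type) [NormedAddCommGroup P] [NormedSpace ℂ P] [CompleteSpace P]
    [SecondCountableTopology P] [HilbertCzeroModule Y P] (AP : GAction Gp P)
    (Q : Type) [NormedAddCommGroup Q] [NormedSpace ℂ Q] [CompleteSpace Q]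
    [SecondCountableTopology Q] [HilbertCzeroModule Y Q] (AQ : GAction Gp Q)
    -- the pre-G-Hilbert submodules
    (P₀ : Submodule ℂ P) (Q₀ : Submodule ℂ Q)
    (hP₀smul : ∀ p ∈ P₀, ∀ f : C₀(Y, ℂ), modSMul Y p f ∈ P₀)
    (hQ₀smul : ∀ q ∈ Q₀, ∀ f : C₀(Y, ℂ), modSMul Y q f ∈ Q₀)
    (hP₀dense : ∀ (p : P) (ε : ℝ), 0 < ε → ∃ p₀ ∈ P₀, ‖p - p₀‖ < ε)
    (hQ₀dense : ∀ (q : Q) (ε : ℝ), 0 < ε → ∃ q₀ ∈ Q₀, ‖q - q₀‖ < ε)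
    (hP₀inv : ∀ (g : Gp.G) (p p' : P), p ∈ P₀ →
      AP.act g (fibMk Y P (Gp.s g) p) = fibMk Y P (Gp.r g) p' →
      ∃ p₀ ∈ P₀, fibMk Y P (Gp.r g) p₀ = fibMk Y P (Gp.r g) p')
    (hQ₀inv : ∀ (g : Gp.G) (q q' : Q), q ∈ Q₀ →
      AQ.act g (fibMk Y Q (Gp.s g) q) = fibMk Y Q (Gp.r g) q' →
      ∃ q₀ ∈ Q₀, fibMk Y Q (Gp.r g) q₀ = fibMk Y Q (Gp.r g) q')
    -- the tensor product P ⊗_{C₀(Y)} Q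
    (R : Type) [NormedAddCommGroup R] [NormedSpace ℂ R] [CompleteSpace R]
    [SecondCountableTopology R] [HilbertCzeroModule Y R]
    (td : TensorData Y P Q R) :
    ∃ AR : GAction Gp R, IsDiagonalAction td AP AQ AR :=
  ⟨diagAction td AP AQ, isDiagonalAction_diagAction td AP AQ⟩

end Stabilization
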